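/- Let α > 3, β > 0, t₀ > 0, let Φ : H → ℝ be convex and twice continuously differentiable with x* ∈ argmin Φ, and let x : [t₀, ∞) → H be a solution of (DIN-AVD). Then: (i) ∫_{t₀}^∞ t(Φ(x(t)) − min Φ) dt < ∞ and ∫_{t₀}^∞ t‖ẋ(t)‖² dt < ∞; (ii) ∫_{t₀}^∞ t⟨x(t) − x*, ∇Φ(x(t))⟩ dt < ∞; (iii) the limits lim_{t→∞} ‖x(t) − x*‖ and lim_{t→∞} t⟨x(t) − x*, ẋ(t) + β∇Φ(x(t))⟩ exist. -/

import Mathlib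

/-!
For `2 < λ ≤ α - 1`, the energy `E_λ` of `dinAvdEnergy` is eventually nonnegative, and
convexity makes its dissipation `-E_λ'` dominate a nonnegative combination of
`t ⟪x - x*, ∇Φ(x)⟫` and `t ‖x'‖²`. Hence `E_λ` converges and its dissipation is integrable. Taking
`λ = α - 1` gives (ii), and with it the first half of (i) because
`Φ(x) - min Φ ≤ ⟪x - x*, ∇Φ(x)⟫`; a `λ` strictly between `2` and `α - 1` gives the second half.

The difference of the energies for `λ = α - 1` and `λ = (α + 1) / 2` shows that
`(α - 1) q + t ⟪x - x*, x' + β ∇Φ(x)⟫` converges, where `q = ‖x - x*‖² / 2`. As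
`⟪x - x*, x'⟫ = q'` and `⟪x - x*, ∇Φ(x)⟫` is integrable, this is the convergence of
`r + t / (α - 1) * r'` for a perturbation `r` of `q` by a convergent integral, which forces `r`,
hence `q`, to converge.
-/

open Filter MeasureTheory Set
open scoped Topology RealInnerProductSpace

variable {H : Type*} [NormedAddCommGroup H] [InnerProductSpace ℝ H] [CompleteSpace H]

/-- `x`, together with its first and second derivatives `x'`, `x''`, is a twice continuously
differentiable solution of (DIN-AVD) on `[t₀, ∞)`:
`ẍ(t) + (α/t) ẋ(t) + β ∇²Φ(x(t)) ẋ(t) + ∇Φ(x(t)) = 0`. -/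
def IsDINAVDSolution (α β t₀ : ℝ) (Φ : H → ℝ) (x x' x'' : ℝ → H) : Prop :=
  (∀ t ∈ Set.Ici t₀, HasDerivAt x (x' t) t) ∧
  (∀ t ∈ Set.Ici t₀, HasDerivAt x' (x'' t) t) ∧
  ContinuousOn x'' (Set.Ici t₀) ∧
  ∀ t ∈ Set.Ici t₀,
    x'' t + (α / t) • x' t + β • (fderiv ℝ (gradient Φ) (x t)) (x' t)
      + gradient Φ (x t) = 0

section AsymptoticAnalysis

variable {E : Type*} [NormedAddCommGroup E]

theorem exists_tendsto_atTop_of_hasDerivAt_nonpos {f f' : ℝ → ℝ}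
    (hf : ∀ᶠ t in atTop, HasDerivAt f (f' t) t) (hf' : ∀ᶠ t in atTop, f' t ≤ 0)
    (hbdd : atTop.IsBoundedUnder (· ≥ ·) f) : ∃ l, Tendsto f atTop (𝓝 l) := by
  obtain ⟨b, hb⟩ := hbdd
  obtain ⟨a, ha⟩ := eventually_atTop.1 (hf.and (hf'.and (eventually_map.1 hb)))
  have anti : AntitoneOn f (Ici a) :=
    antitoneOn_of_hasDerivWithinAt_nonpos (convex_Ici a)
      (fun t ht => (ha t ht).1.continuousAt.continuousWithinAt)
      (fun t ht => (ha t (interior_subset ht)).1.hasDerivWithinAt)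
      (fun t ht => (ha t (interior_subset ht)).2.1)
  have bdd : BddBelow (range fun t : Ici a => f t) :=
    ⟨b, forall_mem_range.2 fun t => (ha t t.2).2.2⟩
  exact ⟨_, tendsto_comp_val_Ici_atTop.1
    (tendsto_atTop_ciInf (antitoneOn_iff_antitone.1 anti) bdd)⟩

theorem integrableAtFilter_atTop_of_hasDerivAt_nonpos {f f' : ℝ → ℝ} {l : ℝ}
    (hf : ∀ᶠ t in atTop, HasDerivAt f (f' t) t) (hf' : ∀ᶠ t in atTop, f' t ≤ 0)
    (hl : Tendsto f atTop (𝓝 l)) : IntegrableAtFilter f' atTop := by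
  obtain ⟨a, ha⟩ := eventually_atTop.1 (hf.and hf')
  exact ⟨Ioi a, Ioi_mem_atTop a, integrableOn_Ioi_deriv_of_nonpos'
    (fun t ht => (ha t ht).1) (fun t ht => (ha t (le_of_lt ht)).2) hl⟩

theorem integrableOn_Ici_of_eventually_norm_le_mul {f : ℝ → E} {g : ℝ → ℝ} {a C : ℝ}
    (hf : ContinuousOn f (Ici a)) (hg : IntegrableAtFilter g atTop)
    (hfg : ∀ᶠ t in atTop, ‖f t‖ ≤ C * g t) : IntegrableOn f (Ici a) :=
  (hf.locallyIntegrableOn measurableSet_Ici).integrableOn_of_isBigO_atTop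
    (.of_bound' (hfg.mono fun _ ht => ht.trans (le_abs_self _))) (hg.smul C)

variable [NormedSpace ℝ E]

/-- The weight `t ^ k` turns `f t + (t / k) • f' t` into a derivative:
`(t ^ k • f t)' = k t ^ (k - 1) • (f t + (t / k) • f' t)`. -/
theorem norm_le_of_norm_add_smul_deriv_le {f f' : ℝ → E} {k a ε t : ℝ} (hk : 0 < k) (ha : 0 < a)
    (hf : ∀ s ∈ Ici a, HasDerivAt f (f' s) s) (hε : ∀ s ∈ Ici a, ‖f s + (s / k) • f' s‖ ≤ ε)
    (ht : a ≤ t) : ‖f t‖ ≤ (a / t) ^ k * ‖f a‖ + ε := by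
  have pos : ∀ s ∈ Ici a, 0 < s := fun s hs => ha.trans_le hs
  have hpow : ∀ s ∈ Ici a, HasDerivAt (fun u => u ^ k) (k * s ^ (k - 1)) s := fun s hs =>
    Real.hasDerivAt_rpow_const (Or.inl (pos s hs).ne')
  have hderiv : ∀ s ∈ Ici a, HasDerivAt (fun u => u ^ k • f u)
      ((k * s ^ (k - 1)) • (f s + (s / k) • f' s)) s := fun s hs => by
    refine ((hpow s hs).smul (hf s hs)).congr_deriv ?_
    have hs₀ : 0 < s := pos s hs
    have hweight : k * s ^ (k - 1) * (s / k) = s ^ k := by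
      rw [Real.rpow_sub_one hs₀.ne']
      field_simp
    rw [smul_add, smul_smul, hweight, add_comm]
  have hbound : ∀ s ∈ Ico a t, ‖(k * s ^ (k - 1)) • (f s + (s / k) • f' s)‖ ≤
      k * s ^ (k - 1) * ε := fun s hs => by
    have hweight : 0 ≤ k * s ^ (k - 1) :=
      mul_nonneg hk.le (Real.rpow_nonneg (pos s hs.1).le _)
    rw [norm_smul, Real.norm_of_nonneg hweight]
    exact mul_le_mul_of_nonneg_left (hε s hs.1) hweight
  have hε₀ : 0 ≤ ε := (norm_nonneg _).trans (hε a self_mem_Ici)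
  have hB : ∀ s ∈ Ici a, HasDerivAt (fun u => a ^ k * ‖f a‖ + u ^ k * ε)
      (k * s ^ (k - 1) * ε) s := fun s hs => ((hpow s hs).mul_const ε).const_add _
  have hgrowth : ‖t ^ k • f t‖ ≤ a ^ k * ‖f a‖ + t ^ k * ε :=
    image_norm_le_of_norm_deriv_right_le_deriv_boundary'
      (fun s hs => (hderiv s hs.1).continuousAt.continuousWithinAt)
      (fun s hs => (hderiv s hs.1).hasDerivWithinAt)
      (by
        rw [norm_smul, Real.norm_of_nonneg (Real.rpow_nonneg ha.le k)]
        exact le_add_of_nonneg_right (mul_nonneg (Real.rpow_nonneg ha.le k) hε₀))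
      (fun s hs => (hB s hs.1).continuousAt.continuousWithinAt)
      (fun s hs => (hB s hs.1).hasDerivWithinAt) hbound (right_mem_Icc.2 ht)
  have htk : 0 < t ^ k := Real.rpow_pos_of_pos (pos t ht) k
  rw [norm_smul, Real.norm_of_nonneg htk.le] at hgrowth
  rw [Real.div_rpow ha.le (pos t ht).le]
  field_simp
  linarith

theorem tendsto_of_tendsto_add_smul_deriv {f f' : ℝ → E} {k : ℝ} {l : E} (hk : 0 < k)
    (hf : ∀ᶠ t in atTop, HasDerivAt f (f' t) t)
    (hl : Tendsto (fun t => f t + (t / k) • f' t) atTop (𝓝 l)) : Tendsto f atTop (𝓝 l) := by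
  rw [Metric.tendsto_nhds]
  intro ε hε
  obtain ⟨a, ha⟩ := eventually_atTop.1 ((eventually_gt_atTop 0).and
    (hf.and (Metric.tendsto_nhds.1 hl (ε / 2) (half_pos hε))))
  have ha₀ : 0 < a := (ha a le_rfl).1
  have hdecay : Tendsto (fun t => (a / t) ^ k * ‖f a - l‖) atTop (𝓝 0) := by
    simpa [Real.zero_rpow hk.ne'] using
      ((tendsto_id.const_div_atTop a).rpow_const (Or.inr hk.le)).mul_const ‖f a - l‖
  filter_upwards [eventually_ge_atTop a, hdecay.eventually_lt_const (half_pos hε)] with t ht hlt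
  have hle : ‖f t - l‖ ≤ (a / t) ^ k * ‖f a - l‖ + ε / 2 :=
    norm_le_of_norm_add_smul_deriv_le hk ha₀ (f := fun s => f s - l)
      (fun s hs => (ha s hs).2.1.sub_const l)
      (fun s hs => by
        rw [sub_add_eq_add_sub, ← dist_eq_norm]
        exact (ha s hs).2.2.le) ht
  rw [dist_eq_norm]
  linarith

theorem exists_hasDerivAt_and_tendsto_of_integrableOn_Ici [CompleteSpace E] {g : ℝ → E} {a : ℝ}
    (hg : ContinuousOn g (Ici a)) (hint : IntegrableOn g (Ici a)) :
    ∃ (G : ℝ → E) (l : E), (∀ t ∈ Ioi a, HasDerivAt G (g t) t) ∧ Tendsto G atTop (𝓝 l) := by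
  refine ⟨fun t => ∫ s in a..t, g s, ∫ s in Ioi a, g s, fun t ht => ?_,
    intervalIntegral_tendsto_integral_Ioi a (hint.mono_set Ioi_subset_Ici_self) tendsto_id⟩
  have hat : uIcc a t ⊆ Ici a := by
    rw [uIcc_of_le (le_of_lt ht)]
    exact Icc_subset_Ici_self
  exact intervalIntegral.integral_hasDerivAt_right (hg.mono hat).intervalIntegrable
    ((hg.mono Ioi_subset_Ici_self).stronglyMeasurableAtFilter isOpen_Ioi t ht)
    (hg.continuousAt (Ici_mem_nhds ht))

theorem exists_tendsto_of_tendsto_add_smul_deriv_add [CompleteSpace E] {f f' g : ℝ → E} {k a : ℝ}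
    {l : E} (hk : 0 < k) (hf : ∀ᶠ t in atTop, HasDerivAt f (f' t) t)
    (hg : ContinuousOn g (Ici a)) (hint : IntegrableOn g (Ici a))
    (hl : Tendsto (fun t => f t + (t / k) • (f' t + g t)) atTop (𝓝 l)) :
    ∃ m, Tendsto f atTop (𝓝 m) := by
  obtain ⟨G, m, hG, hGm⟩ := exists_hasDerivAt_and_tendsto_of_integrableOn_Ici hg hint
  have hsum : Tendsto (fun t => f t + G t) atTop (𝓝 (l + m)) := by
    refine tendsto_of_tendsto_add_smul_deriv (f' := fun t => f' t + g t) hk ?_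
      ((hl.add hGm).congr fun t => by abel)
    filter_upwards [hf, eventually_gt_atTop a] with t hft hat using hft.add (hG t hat)
  exact ⟨_, (hsum.sub hGm).congr fun t => by abel⟩

end AsymptoticAnalysis

theorem sub_le_inner_of_convexOn_of_hasGradientAt {s : Set H} {Φ : H → ℝ} {g p z : H}
    (hconv : ConvexOn ℝ s Φ) (hz : z ∈ s) (hp : p ∈ s) (hg : HasGradientAt Φ g z) :
    Φ z - Φ p ≤ ⟪z - p, g⟫ := by
  have hline : ConvexOn ℝ (AffineMap.lineMap z p ⁻¹' s) (Φ ∘ AffineMap.lineMap (k := ℝ) z p) :=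
    hconv.comp_affineMap _
  have hderiv : HasDerivAt (Φ ∘ AffineMap.lineMap (k := ℝ) z p) ⟪g, p - z⟫ 0 := by
    have hg₀ : HasFDerivAt Φ (innerSL ℝ g) (AffineMap.lineMap z p (0 : ℝ)) := by
      rw [AffineMap.lineMap_apply_zero]
      exact hg.hasFDerivAt
    exact hg₀.comp_hasDerivAt 0 AffineMap.hasDerivAt_lineMap
  have hslope : ⟪g, p - z⟫ ≤ Φ p - Φ z := by
    simpa [slope_def_field] using
      hline.le_slope_of_hasDerivAt (by simpa using hz) (by simpa using hp) zero_lt_one hderiv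
  rw [← neg_sub z p, inner_neg_right, real_inner_comm] at hslope
  linarith

theorem differentiable_gradient_of_contDiff_two {Φ : H → ℝ} (hΦ : ContDiff ℝ 2 Φ) :
    Differentiable ℝ (gradient Φ) :=
  (InnerProductSpace.toDual ℝ H).symm.toContinuousLinearEquiv.differentiable.comp
    ((hΦ.fderiv_right (m := 1) (by norm_num)).differentiable one_ne_zero)

/-- `Φ` attains its minimum at `xstar` and is star-convex about `xstar`, in the first-order
form that makes the energies `dinAvdEnergy` decrease. -/
structure IsStarConvexMin (Φ : H → ℝ) (xstar : H) : Prop where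
  le : ∀ z, Φ xstar ≤ Φ z
  sub_le_inner : ∀ z, Φ z - Φ xstar ≤ ⟪z - xstar, gradient Φ z⟫

namespace IsStarConvexMin

variable {Φ : H → ℝ} {xstar : H}

theorem sub_nonneg (hmin : IsStarConvexMin Φ xstar) (z : H) : 0 ≤ Φ z - Φ xstar :=
  _root_.sub_nonneg.2 (hmin.le z)

theorem inner_gradient_nonneg (hmin : IsStarConvexMin Φ xstar) (z : H) :
    0 ≤ ⟪z - xstar, gradient Φ z⟫ :=
  (hmin.sub_nonneg z).trans (hmin.sub_le_inner z)

theorem of_convexOn (hconv : ConvexOn ℝ univ Φ) (hΦ : Differentiable ℝ Φ)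
    (hmin : ∀ z, Φ xstar ≤ Φ z) : IsStarConvexMin Φ xstar :=
  ⟨hmin, fun z => sub_le_inner_of_convexOn_of_hasGradientAt hconv (mem_univ z) (mem_univ xstar)
    (hΦ z).hasGradientAt⟩

end IsStarConvexMin

/-- The Lyapunov energy `E_λ` of the curve `x` with velocity `x'`, relative to the minimizer
`xstar`. The parameter `lam` is `λ`; the energy is nonincreasing for large `t` along solutions of
(DIN-AVD) when `2 < λ ≤ α - 1`. -/
noncomputable def dinAvdEnergy (α β lam : ℝ) (Φ : H → ℝ) (xstar : H) (x x' : ℝ → H) (t : ℝ) : ℝ :=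
  t * (t - β + (α - 1 - lam) * β) * (Φ (x t) - Φ xstar)
    + 1 / 2 * ‖lam • (x t - xstar) + t • (x' t + β • gradient Φ (x t))‖ ^ 2
    + lam * (α - 1 - lam) / 2 * ‖x t - xstar‖ ^ 2

/-- The rate of decrease `-E_λ'` of `dinAvdEnergy` along a solution of (DIN-AVD), written without
second derivatives. -/
noncomputable def dinAvdDissipation (α β lam : ℝ) (Φ : H → ℝ) (xstar : H) (x x' : ℝ → H)
    (t : ℝ) : ℝ :=
  lam * (t - β) * ⟪x t - xstar, gradient Φ (x t)⟫ + (α - 1 - lam) * (t * ‖x' t‖ ^ 2)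
    + t * β * (t - β) * ‖gradient Φ (x t)‖ ^ 2
    - (2 * t - β + (α - 1 - lam) * β) * (Φ (x t) - Φ xstar)

section Energy

variable {α β lam : ℝ} {Φ : H → ℝ} {xstar : H} {x x' : ℝ → H}

theorem le_dinAvdEnergy {t : ℝ} (hβ : 0 ≤ β) (hlam : 0 ≤ lam) (hlam' : lam ≤ α - 1) (ht : 0 ≤ t)
    (hmin : Φ xstar ≤ Φ (x t)) :
    t * (t - β) * (Φ (x t) - Φ xstar) ≤ dinAvdEnergy α β lam Φ xstar x x' t := by
  have : 0 ≤ α - 1 - lam := sub_nonneg.2 hlam'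
  have : 0 ≤ Φ (x t) - Φ xstar := sub_nonneg.2 hmin
  have hrest : 0 ≤ t * ((α - 1 - lam) * β) * (Φ (x t) - Φ xstar)
      + 1 / 2 * ‖lam • (x t - xstar) + t • (x' t + β • gradient Φ (x t))‖ ^ 2
      + lam * (α - 1 - lam) / 2 * ‖x t - xstar‖ ^ 2 := by positivity
  unfold dinAvdEnergy
  linarith

theorem dinAvdEnergy_sub (α β lam mu : ℝ) (Φ : H → ℝ) (xstar : H) (x x' : ℝ → H) (t : ℝ) :
    dinAvdEnergy α β lam Φ xstar x x' t - dinAvdEnergy α β mu Φ xstar x x' t =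
      (lam - mu) * ((α - 1) * (‖x t - xstar‖ ^ 2 / 2)
        + t * ⟪x t - xstar, x' t + β • gradient Φ (x t)⟫ - β * (t * (Φ (x t) - Φ xstar))) := by
  simp only [dinAvdEnergy, norm_add_sq_real, norm_smul, real_inner_smul_left,
    real_inner_smul_right, mul_pow, Real.norm_eq_abs, sq_abs]
  ring

theorem eventually_le_dinAvdDissipation (hβ : 0 ≤ β) (hlam : 2 < lam)
    (hmin : IsStarConvexMin Φ xstar) :
    ∀ᶠ t in atTop, (lam - 2) / 2 * (t * ⟪x t - xstar, gradient Φ (x t)⟫)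
      + (α - 1 - lam) * (t * ‖x' t‖ ^ 2) ≤ dinAvdDissipation α β lam Φ xstar x x' t := by
  have hlam₂ : 0 < lam - 2 := sub_pos.2 hlam
  filter_upwards [eventually_ge_atTop 0, eventually_ge_atTop β,
    eventually_ge_atTop ((β - (α - 1 - lam) * β) / 2),
    eventually_ge_atTop (2 * (α - 2) * β / (lam - 2))] with t ht₀ htβ hcoeff hlarge
  have hinner : 0 ≤ ⟪x t - xstar, gradient Φ (x t)⟫ := hmin.inner_gradient_nonneg (x t)
  have hgrad : 0 ≤ t * β * (t - β) * ‖gradient Φ (x t)‖ ^ 2 := by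
    have := sub_nonneg.2 htβ
    positivity
  have hgap : (2 * t - β + (α - 1 - lam) * β) * (Φ (x t) - Φ xstar) ≤
      (2 * t - β + (α - 1 - lam) * β) * ⟪x t - xstar, gradient Φ (x t)⟫ :=
    mul_le_mul_of_nonneg_left (hmin.sub_le_inner (x t)) (by linarith)
  have hslack : 0 ≤ ((lam - 2) * t - 2 * (α - 2) * β) * ⟪x t - xstar, gradient Φ (x t)⟫ := by
    rw [div_le_iff₀' hlam₂] at hlarge
    exact mul_nonneg (sub_nonneg.2 hlarge) hinner
  unfold dinAvdDissipation
  linarith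

theorem eventually_dinAvdDissipation_nonneg (hβ : 0 ≤ β) (hlam : 2 < lam) (hlam' : lam ≤ α - 1)
    (hmin : IsStarConvexMin Φ xstar) :
    ∀ᶠ t in atTop, 0 ≤ dinAvdDissipation α β lam Φ xstar x x' t := by
  filter_upwards [eventually_le_dinAvdDissipation hβ hlam hmin, eventually_ge_atTop 0]
    with t hle ht
  have hinner := hmin.inner_gradient_nonneg (x t)
  have := sub_nonneg.2 hlam.le
  have := sub_nonneg.2 hlam'
  exact le_trans (by positivity) hle

end Energy

namespace IsDINAVDSolution

variable {α β t₀ lam : ℝ} {Φ : H → ℝ} {xstar : H} {x x' x'' : ℝ → H}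

theorem continuousOn (hsol : IsDINAVDSolution α β t₀ Φ x x' x'') : ContinuousOn x (Ici t₀) :=
  fun t ht => (hsol.1 t ht).continuousAt.continuousWithinAt

theorem continuousOn_velocity (hsol : IsDINAVDSolution α β t₀ Φ x x' x'') :
    ContinuousOn x' (Ici t₀) :=
  fun t ht => (hsol.2.1 t ht).continuousAt.continuousWithinAt

theorem continuousOn_inner_gradient (hsol : IsDINAVDSolution α β t₀ Φ x x' x'')
    (hΦ' : Continuous (gradient Φ)) (xstar : H) :
    ContinuousOn (fun t => ⟪x t - xstar, gradient Φ (x t)⟫) (Ici t₀) :=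
  (hsol.continuousOn.sub continuousOn_const).inner (hΦ'.comp_continuousOn hsol.continuousOn)

theorem hasDerivAt_velocity_add_gradient {t : ℝ} (hsol : IsDINAVDSolution α β t₀ Φ x x' x'')
    (hΦ' : DifferentiableAt ℝ (gradient Φ) (x t)) (ht : t ∈ Ici t₀) :
    HasDerivAt (fun s => x' s + β • gradient Φ (x s)) (-(α / t) • x' t - gradient Φ (x t)) t := by
  obtain ⟨hx, hx', -, heq⟩ := hsol
  refine ((hx' t ht).add
    ((hΦ'.hasFDerivAt.comp_hasDerivAt t (hx t ht)).const_smul β)).congr_deriv ?_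
  rw [← sub_eq_zero, ← heq t ht]
  module

theorem hasDerivAt_dinAvdEnergy {t : ℝ} (hsol : IsDINAVDSolution α β t₀ Φ x x' x'')
    (hΦ : DifferentiableAt ℝ Φ (x t)) (hΦ' : DifferentiableAt ℝ (gradient Φ) (x t))
    (lam : ℝ) (xstar : H) (ht : t ∈ Ici t₀) (ht₀ : t ≠ 0) :
    HasDerivAt (dinAvdEnergy α β lam Φ xstar x x')
      (-dinAvdDissipation α β lam Φ xstar x x' t) t := by
  have hx : HasDerivAt (fun s => x s - xstar) (x' t) t := (hsol.1 t ht).sub_const xstar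
  have hgap : HasDerivAt (fun s => Φ (x s) - Φ xstar) ⟪gradient Φ (x t), x' t⟫ t :=
    (hΦ.hasGradientAt.hasFDerivAt.comp_hasDerivAt t (hsol.1 t ht)).sub_const (Φ xstar)
  have hcoeff : HasDerivAt (fun s => s * (s - β + (α - 1 - lam) * β))
      (2 * t - β + (α - 1 - lam) * β) t :=
    ((hasDerivAt_id' t).mul
      (((hasDerivAt_id' t).sub_const β).add_const ((α - 1 - lam) * β))).congr_deriv (by ring)
  have hz : HasDerivAt (fun s => lam • (x s - xstar) + s • (x' s + β • gradient Φ (x s)))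
      (-(α - 1 - lam) • x' t - (t - β) • gradient Φ (x t)) t := by
    refine ((hx.const_smul lam).add ((hasDerivAt_id' t).smul
      (hsol.hasDerivAt_velocity_add_gradient hΦ' ht))).congr_deriv ?_
    match_scalars <;> field_simp <;> ring
  refine (((hcoeff.mul hgap).add (hz.norm_sq.const_mul (1 / 2))).add
    (hx.norm_sq.const_mul (lam * (α - 1 - lam) / 2))).congr_deriv ?_
  simp only [dinAvdDissipation, inner_add_left, inner_sub_right,
    real_inner_smul_left, real_inner_smul_right, ← real_inner_self_eq_norm_sq]
  rw [real_inner_comm (x' t) (gradient Φ (x t))]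
  ring

theorem eventually_hasDerivAt_dinAvdEnergy (hsol : IsDINAVDSolution α β t₀ Φ x x' x'')
    (hΦ : Differentiable ℝ Φ) (hΦ' : Differentiable ℝ (gradient Φ)) (lam : ℝ) (xstar : H) :
    ∀ᶠ t in atTop, HasDerivAt (dinAvdEnergy α β lam Φ xstar x x')
      (-dinAvdDissipation α β lam Φ xstar x x' t) t := by
  filter_upwards [eventually_ge_atTop t₀, eventually_ne_atTop 0] with t ht ht₀
  exact hsol.hasDerivAt_dinAvdEnergy (hΦ _) (hΦ' _) lam xstar ht ht₀

theorem exists_tendsto_dinAvdEnergy (hsol : IsDINAVDSolution α β t₀ Φ x x' x'') (hβ : 0 ≤ β)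
    (hΦ : Differentiable ℝ Φ) (hΦ' : Differentiable ℝ (gradient Φ))
    (hmin : IsStarConvexMin Φ xstar) (hlam : 2 < lam) (hlam' : lam ≤ α - 1) :
    ∃ l, Tendsto (dinAvdEnergy α β lam Φ xstar x x') atTop (𝓝 l) := by
  refine exists_tendsto_atTop_of_hasDerivAt_nonpos
    (hsol.eventually_hasDerivAt_dinAvdEnergy hΦ hΦ' lam xstar) ?_
    (isBoundedUnder_of_eventually_ge (a := 0) ?_)
  · exact (eventually_dinAvdDissipation_nonneg hβ hlam hlam' hmin).mono
      fun t ht => neg_nonpos.2 ht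
  · filter_upwards [eventually_ge_atTop 0, eventually_ge_atTop β] with t ht htβ
    exact (mul_nonneg (mul_nonneg ht (sub_nonneg.2 htβ)) (hmin.sub_nonneg (x t))).trans
      (le_dinAvdEnergy hβ (by linarith) hlam' ht (hmin.le (x t)))

theorem integrableAtFilter_dinAvdDissipation (hsol : IsDINAVDSolution α β t₀ Φ x x' x'')
    (hβ : 0 ≤ β) (hΦ : Differentiable ℝ Φ) (hΦ' : Differentiable ℝ (gradient Φ))
    (hmin : IsStarConvexMin Φ xstar) (hlam : 2 < lam) (hlam' : lam ≤ α - 1) :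
    IntegrableAtFilter (dinAvdDissipation α β lam Φ xstar x x') atTop := by
  obtain ⟨l, hl⟩ := hsol.exists_tendsto_dinAvdEnergy hβ hΦ hΦ' hmin hlam hlam'
  have hneg := integrableAtFilter_atTop_of_hasDerivAt_nonpos
    (hsol.eventually_hasDerivAt_dinAvdEnergy hΦ hΦ' lam xstar)
    ((eventually_dinAvdDissipation_nonneg hβ hlam hlam' hmin).mono
      fun t ht => neg_nonpos.2 ht) hl
  exact (neg_neg (dinAvdDissipation α β lam Φ xstar x x')) ▸ hneg.neg

theorem integrableOn_mul_inner_gradient (hsol : IsDINAVDSolution α β t₀ Φ x x' x'')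
    (hα : 3 < α) (hβ : 0 ≤ β) (hΦ : Differentiable ℝ Φ)
    (hΦ' : Differentiable ℝ (gradient Φ)) (hmin : IsStarConvexMin Φ xstar) :
    IntegrableOn (fun t => t * ⟪x t - xstar, gradient Φ (x t)⟫) (Ici t₀) := by
  have hlam : 2 < α - 1 := by linarith
  refine integrableOn_Ici_of_eventually_norm_le_mul (C := 2 / (α - 3))
    (continuousOn_id.mul (hsol.continuousOn_inner_gradient hΦ'.continuous xstar))
    (hsol.integrableAtFilter_dinAvdDissipation hβ hΦ hΦ' hmin hlam le_rfl) ?_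
  filter_upwards [eventually_le_dinAvdDissipation (α := α) (x := x) (x' := x') hβ hlam hmin,
    eventually_ge_atTop 0] with t hle ht
  have hinner := hmin.inner_gradient_nonneg (x t)
  have hα₃ : 0 < α - 3 := sub_pos.2 hα
  rw [Real.norm_of_nonneg (mul_nonneg ht hinner), div_mul_eq_mul_div, le_div_iff₀ hα₃]
  linarith

theorem integrableOn_mul_norm_velocity_sq (hsol : IsDINAVDSolution α β t₀ Φ x x' x'')
    (hα : 3 < α) (hβ : 0 ≤ β) (hΦ : Differentiable ℝ Φ)
    (hΦ' : Differentiable ℝ (gradient Φ)) (hmin : IsStarConvexMin Φ xstar) :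
    IntegrableOn (fun t => t * ‖x' t‖ ^ 2) (Ici t₀) := by
  have hlam : 2 < (α + 1) / 2 := by linarith
  have hlam' : (α + 1) / 2 ≤ α - 1 := by linarith
  refine integrableOn_Ici_of_eventually_norm_le_mul (C := 2 / (α - 3))
    (continuousOn_id.mul (hsol.continuousOn_velocity.norm.pow 2))
    (hsol.integrableAtFilter_dinAvdDissipation hβ hΦ hΦ' hmin hlam hlam') ?_
  filter_upwards [eventually_le_dinAvdDissipation (α := α) (x := x) (x' := x') hβ hlam hmin,
    eventually_ge_atTop 0] with t hle ht
  have hinner : 0 ≤ ((α + 1) / 2 - 2) / 2 * (t * ⟪x t - xstar, gradient Φ (x t)⟫) :=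
    mul_nonneg (by linarith) (mul_nonneg ht (hmin.inner_gradient_nonneg (x t)))
  have hα₃ : 0 < α - 3 := sub_pos.2 hα
  rw [Real.norm_of_nonneg (by positivity), div_mul_eq_mul_div, le_div_iff₀ hα₃]
  linarith

theorem integrableOn_mul_gap (hsol : IsDINAVDSolution α β t₀ Φ x x' x'')
    (hα : 3 < α) (hβ : 0 ≤ β) (hΦ : Differentiable ℝ Φ)
    (hΦ' : Differentiable ℝ (gradient Φ)) (hmin : IsStarConvexMin Φ xstar) :
    IntegrableOn (fun t => t * (Φ (x t) - Φ xstar)) (Ici t₀) := by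
  refine integrableOn_Ici_of_eventually_norm_le_mul (C := 1)
    (continuousOn_id.mul
      ((hΦ.continuous.comp_continuousOn hsol.continuousOn).sub continuousOn_const))
    ⟨Ici t₀, Ici_mem_atTop t₀, hsol.integrableOn_mul_inner_gradient hα hβ hΦ hΦ' hmin⟩ ?_
  filter_upwards [eventually_ge_atTop 0] with t ht
  rw [Real.norm_of_nonneg (mul_nonneg ht (hmin.sub_nonneg (x t))), one_mul]
  exact mul_le_mul_of_nonneg_left (hmin.sub_le_inner (x t)) ht

theorem tendsto_mul_gap (hsol : IsDINAVDSolution α β t₀ Φ x x' x'')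
    (hα : 3 < α) (hβ : 0 ≤ β) (hΦ : Differentiable ℝ Φ)
    (hΦ' : Differentiable ℝ (gradient Φ)) (hmin : IsStarConvexMin Φ xstar) :
    Tendsto (fun t => t * (Φ (x t) - Φ xstar)) atTop (𝓝 0) := by
  have hlam : 2 < α - 1 := by linarith
  obtain ⟨l, hl⟩ := hsol.exists_tendsto_dinAvdEnergy hβ hΦ hΦ' hmin hlam le_rfl
  have hdecay : Tendsto (fun t => dinAvdEnergy α β (α - 1) Φ xstar x x' t / (t - β)) atTop (𝓝 0) :=
    hl.div_atTop (tendsto_atTop_add_const_right atTop (-β) tendsto_id)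
  refine squeeze_zero' ?_ ?_ hdecay
  · filter_upwards [eventually_ge_atTop 0] with t ht
    exact mul_nonneg ht (hmin.sub_nonneg (x t))
  · filter_upwards [eventually_ge_atTop 0, eventually_gt_atTop β] with t ht htβ
    rw [le_div_iff₀ (sub_pos.2 htβ), mul_right_comm]
    exact le_dinAvdEnergy hβ (by linarith) le_rfl ht (hmin.le (x t))

theorem exists_tendsto_half_norm_sub_sq_add_inner (hsol : IsDINAVDSolution α β t₀ Φ x x' x'')
    (hα : 3 < α) (hβ : 0 ≤ β) (hΦ : Differentiable ℝ Φ)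
    (hΦ' : Differentiable ℝ (gradient Φ)) (hmin : IsStarConvexMin Φ xstar) :
    ∃ l, Tendsto (fun t => (α - 1) * (‖x t - xstar‖ ^ 2 / 2)
      + t * ⟪x t - xstar, x' t + β • gradient Φ (x t)⟫) atTop (𝓝 l) := by
  obtain ⟨l, hl⟩ := hsol.exists_tendsto_dinAvdEnergy (lam := α - 1) hβ hΦ hΦ' hmin
    (by linarith) le_rfl
  obtain ⟨m, hm⟩ := hsol.exists_tendsto_dinAvdEnergy (lam := (α + 1) / 2) hβ hΦ hΦ' hmin
    (by linarith) (by linarith)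
  have hgap := hsol.tendsto_mul_gap hα hβ hΦ hΦ' hmin
  have hne : α - 1 - (α + 1) / 2 ≠ 0 := by linarith
  refine ⟨_, (((hl.sub hm).div_const (α - 1 - (α + 1) / 2)).add
    (hgap.const_mul β)).congr fun t => ?_⟩
  rw [dinAvdEnergy_sub, mul_div_cancel_left₀ _ hne, sub_add_cancel]

theorem exists_tendsto_half_norm_sub_sq (hsol : IsDINAVDSolution α β t₀ Φ x x' x'')
    (hα : 3 < α) (hβ : 0 ≤ β) (hΦ : Differentiable ℝ Φ)
    (hΦ' : Differentiable ℝ (gradient Φ)) (hmin : IsStarConvexMin Φ xstar) :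
    ∃ l, Tendsto (fun t => ‖x t - xstar‖ ^ 2 / 2) atTop (𝓝 l) := by
  obtain ⟨l, hl⟩ := hsol.exists_tendsto_half_norm_sub_sq_add_inner hα hβ hΦ hΦ' hmin
  have hk : 0 < α - 1 := by linarith
  have hcont : ContinuousOn (fun t => β * ⟪x t - xstar, gradient Φ (x t)⟫) (Ici t₀) :=
    (hsol.continuousOn_inner_gradient hΦ'.continuous xstar).const_mul β
  have hint : IntegrableOn (fun t => β * ⟪x t - xstar, gradient Φ (x t)⟫) (Ici t₀) := by
    refine integrableOn_Ici_of_eventually_norm_le_mul (C := β) hcont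
      ⟨Ici t₀, Ici_mem_atTop t₀, hsol.integrableOn_mul_inner_gradient hα hβ hΦ hΦ' hmin⟩ ?_
    filter_upwards [eventually_ge_atTop 1] with t ht
    have hinner := hmin.inner_gradient_nonneg (x t)
    rw [Real.norm_of_nonneg (mul_nonneg hβ hinner)]
    exact mul_le_mul_of_nonneg_left (le_mul_of_one_le_left hinner ht) hβ
  refine exists_tendsto_of_tendsto_add_smul_deriv_add (f' := fun t => ⟪x t - xstar, x' t⟫)
    hk ?_ hcont hint ((hl.div_const (α - 1)).congr fun t => ?_)
  · filter_upwards [eventually_ge_atTop t₀] with t ht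
    exact (((hsol.1 t ht).sub_const xstar).norm_sq.div_const 2).congr_deriv (by ring)
  · rw [inner_add_right, real_inner_smul_right, smul_eq_mul]
    field_simp

end IsDINAVDSolution

theorem stmt8_general (α β t₀ : ℝ) (hα : 3 < α) (hβ : 0 ≤ β) (ht₀ : 0 < t₀)
    (Φ : H → ℝ) (hΦ : Differentiable ℝ Φ) (hΦ' : Differentiable ℝ (gradient Φ))
    (xstar : H) (hmin : IsStarConvexMin Φ xstar)
    (x x' x'' : ℝ → H) (hsol : IsDINAVDSolution α β t₀ Φ x x' x'') :
    IntegrableOn (fun t => t * (Φ (x t) - Φ xstar)) (Set.Ici t₀) ∧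
    IntegrableOn (fun t => t * ‖x' t‖ ^ 2) (Set.Ici t₀) ∧
    IntegrableOn (fun t => t * ⟪x t - xstar, gradient Φ (x t)⟫) (Set.Ici t₀) ∧
    (∃ L : ℝ, Tendsto (fun t => ‖x t - xstar‖) atTop (𝓝 L)) ∧
    (∃ L : ℝ, Tendsto (fun t => t * ⟪x t - xstar, x' t + β • gradient Φ (x t)⟫)
      atTop (𝓝 L)) := by
  obtain ⟨l, hl⟩ := hsol.exists_tendsto_half_norm_sub_sq hα hβ hΦ hΦ' hmin
  obtain ⟨m, hm⟩ := hsol.exists_tendsto_half_norm_sub_sq_add_inner hα hβ hΦ hΦ' hmin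
  refine ⟨hsol.integrableOn_mul_gap hα hβ hΦ hΦ' hmin,
    hsol.integrableOn_mul_norm_velocity_sq hα hβ hΦ hΦ' hmin,
    hsol.integrableOn_mul_inner_gradient hα hβ hΦ hΦ' hmin,
    ⟨√(2 * l), (hl.const_mul 2).sqrt.congr fun t => ?_⟩,
    ⟨m - (α - 1) * l, (hm.sub (hl.const_mul (α - 1))).congr fun t => ?_⟩⟩
  · rw [mul_div_cancel₀ _ two_ne_zero, Real.sqrt_sq (norm_nonneg _)]
  · rw [add_sub_cancel_left]

theorem stmt8 (α β t₀ : ℝ) (hα : 3 < α) (hβ : 0 < β) (ht₀ : 0 < t₀)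
    (Φ : H → ℝ) (hconv : ConvexOn ℝ Set.univ Φ) (hΦ : ContDiff ℝ 2 Φ)
    (xstar : H) (hmin : ∀ z, Φ xstar ≤ Φ z)
    (x x' x'' : ℝ → H) (hsol : IsDINAVDSolution α β t₀ Φ x x' x'') :
    IntegrableOn (fun t => t * (Φ (x t) - Φ xstar)) (Set.Ici t₀) ∧
    IntegrableOn (fun t => t * ‖x' t‖ ^ 2) (Set.Ici t₀) ∧
    IntegrableOn (fun t => t * ⟪x t - xstar, gradient Φ (x t)⟫) (Set.Ici t₀) ∧
    (∃ L : ℝ, Tendsto (fun t => ‖x t - xstar‖) atTop (𝓝 L)) ∧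
    (∃ L : ℝ, Tendsto (fun t => t * ⟪x t - xstar, x' t + β • gradient Φ (x t)⟫)
      atTop (𝓝 L)) := by
  have hΦ₁ : Differentiable ℝ Φ := hΦ.differentiable two_ne_zero
  exact stmt8_general α β t₀ hα hβ.le ht₀ Φ hΦ₁ (differentiable_gradient_of_contDiff_two hΦ) xstar
    (.of_convexOn hconv hΦ₁ hmin) x x' x'' hsol
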